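/- Let 𝔠 be a linear subspace of d×d complex matrices and suppose there exist invertible d×d matrices X and Y such that for every C ∈ 𝔠, the matrix XCY has a zero M×N block in the upper-left corner. Then there exist unitary d×d matrices U and V such that for every C ∈ 𝔠, UCV has a zero M×N block in the upper-left corner. -/

import Mathlib

open Matrix

/-!
Entry `(i, j)` of `X * C * Y` is the bilinear form of `C` at row `i` of `X` and column `j` of `Y`,
so a block of `X * C * Y` vanishes exactly when this form vanishes between the span of the rows and
the span of the columns that index the block. Orthonormal bases of these two spans, extended to
orthonormal bases of the whole spaces, are the rows and columns of the required unitaries.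
-/

theorem mul_mul_apply_eq_dotProduct_mulVec {R k l m n : Type*} [NonUnitalSemiring R]
    [Fintype m] [Fintype n] (X : Matrix k m R) (C : Matrix m n R) (Y : Matrix n l R)
    (i : k) (j : l) : (X * C * Y) i j = X.row i ⬝ᵥ C *ᵥ Y.col j := by
  rw [Matrix.mul_assoc]
  rfl

theorem mul_mul_apply_eq_zero_of_mem_span {R k k' l l' m n : Type*} [CommSemiring R]
    [Fintype m] [Fintype n] {X : Matrix k m R} {C : Matrix m n R} {Y : Matrix n l R}
    {s : Set k} {t : Set l} (h : ∀ i j, i ∈ s → j ∈ t → (X * C * Y) i j = 0)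
    {U : Matrix k' m R} {V : Matrix n l' R} {i : k'} {j : l'}
    (hU : U.row i ∈ Submodule.span R (X.row '' s))
    (hV : V.col j ∈ Submodule.span R (Y.col '' t)) : (U * C * V) i j = 0 := by
  classical
  have form_eq_zero : ∀ x ∈ X.row '' s, ∀ y ∈ Y.col '' t, C.toLinearMap₂' R x y = 0 := by
    rintro _ ⟨a, ha, rfl⟩ _ ⟨b, hb, rfl⟩
    rw [toLinearMap₂'_apply', ← mul_mul_apply_eq_dotProduct_mulVec, h a b ha hb]
  rw [mul_mul_apply_eq_dotProduct_mulVec, ← toLinearMap₂'_apply']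
  exact LinearMap.BilinMap.apply_apply_mem_of_mem_span ⊥ _ _ _ form_eq_zero _ _ hU hV

section RCLike

variable {𝕜 : Type*} [RCLike 𝕜]

theorem exists_orthonormalBasis_mem_span_image {ι E : Type*} [Fintype ι] [NormedAddCommGroup E]
    [InnerProductSpace 𝕜 E] [FiniteDimensional 𝕜 E]
    (card_ι : Module.finrank 𝕜 E = Fintype.card ι) {v : ι → E} {t : Set ι}
    (hv : LinearIndepOn 𝕜 v t) :
    ∃ b : OrthonormalBasis ι 𝕜 E, ∀ i ∈ t, b i ∈ Submodule.span 𝕜 (v '' t) := by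
  classical
  let S := Submodule.span 𝕜 (v '' t)
  have finrank_S : Module.finrank 𝕜 S = Fintype.card t := by
    rw [← finrank_span_eq_card hv.linearIndependent, ← Set.image_eq_range]
  let e : OrthonormalBasis t 𝕜 S :=
    (stdOrthonormalBasis 𝕜 S).reindex (Fintype.equivOfCardEq (by simp [finrank_S]))
  let w : ι → E := Function.extend Subtype.val (fun i : t => (e i : E)) 0
  have w_apply (i : t) : w i = e i := Subtype.val_injective.extend_apply _ _ i
  have orthonormal_w : Orthonormal 𝕜 (t.domRestrict w) := by
    have restrict_w : t.domRestrict w = S.subtypeₗᵢ ∘ e := funext w_apply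
    exact restrict_w ▸ e.orthonormal.comp_linearIsometry S.subtypeₗᵢ
  obtain ⟨b, hb⟩ := orthonormal_w.exists_orthonormalBasis_extension_of_card_eq card_ι
  refine ⟨b, fun i hi => ?_⟩
  rw [hb i hi, w_apply ⟨i, hi⟩]
  exact (e ⟨i, hi⟩).2

variable {m n : Type*} [Fintype m] [DecidableEq m] [Fintype n] [DecidableEq n]

theorem exists_mem_unitaryGroup_col_mem_span {Y : Matrix n n 𝕜} {t : Set n}
    (hY : LinearIndepOn 𝕜 Y.col t) :
    ∃ V ∈ unitaryGroup n 𝕜, ∀ j ∈ t, V.col j ∈ Submodule.span 𝕜 (Y.col '' t) := by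
  let toVec := WithLp.linearEquiv 2 𝕜 (n → 𝕜)
  have independent : LinearIndepOn 𝕜 (toVec.symm ∘ Y.col) t :=
    hY.linearIndependent.map' toVec.symm.toLinearMap toVec.symm.ker
  obtain ⟨b, hb⟩ := exists_orthonormalBasis_mem_span_image finrank_euclideanSpace independent
  let a := EuclideanSpace.basisFun n 𝕜
  refine ⟨a.toBasis.toMatrix b, a.toMatrix_orthonormalBasis_mem_unitary b, fun j hj => ?_⟩
  have col_eq : (a.toBasis.toMatrix b).col j = toVec (b j) := rfl
  have image_eq : toVec '' ((toVec.symm ∘ Y.col) '' t) = Y.col '' t := by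
    simp only [Set.image_image, Function.comp_apply, LinearEquiv.apply_symm_apply]
  rw [col_eq, ← image_eq]
  exact Submodule.apply_mem_span_image_of_mem_span toVec.toLinearMap (hb j hj)

theorem exists_mem_unitaryGroup_row_mem_span {X : Matrix m m 𝕜} {s : Set m}
    (hX : LinearIndepOn 𝕜 X.row s) :
    ∃ U ∈ unitaryGroup m 𝕜, ∀ i ∈ s, U.row i ∈ Submodule.span 𝕜 (X.row '' s) := by
  obtain ⟨V, hV, col_mem⟩ := exists_mem_unitaryGroup_col_mem_span (Y := Xᵀ) hX
  exact ⟨Vᵀ, transpose_mem_unitaryGroup_iff.2 hV, col_mem⟩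

theorem decomposable_with_unitaries_general (𝔠 : Set (Matrix m n 𝕜)) {s : Set m} {t : Set n}
    {X : Matrix m m 𝕜} {Y : Matrix n n 𝕜}
    (hX : LinearIndepOn 𝕜 X.row s) (hY : LinearIndepOn 𝕜 Y.col t)
    (h : ∀ C ∈ 𝔠, ∀ i j, i ∈ s → j ∈ t → (X * C * Y) i j = 0) :
    ∃ U V, U ∈ unitaryGroup m 𝕜 ∧ V ∈ unitaryGroup n 𝕜 ∧
      ∀ C ∈ 𝔠, ∀ i j, i ∈ s → j ∈ t → (U * C * V) i j = 0 := by
  obtain ⟨U, hU, row_mem⟩ := exists_mem_unitaryGroup_row_mem_span hX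
  obtain ⟨V, hV, col_mem⟩ := exists_mem_unitaryGroup_col_mem_span hY
  exact ⟨U, V, hU, hV, fun C hC i j hi hj =>
    mul_mul_apply_eq_zero_of_mem_span (h C hC) (row_mem i hi) (col_mem j hj)⟩

end RCLike

/-- Invertible matrices in the definition of decomposability can be replaced by
unitaries: if some invertible X, Y bring every element of the subspace 𝔠 to a
form with zero M×N upper-left block, then some unitaries U, V do as well. -/
theorem decomposable_with_unitaries (d M N : ℕ)
    (𝔠 : Submodule ℂ (Matrix (Fin d) (Fin d) ℂ))
    (X Y : Matrix (Fin d) (Fin d) ℂ) (hX : IsUnit X) (hY : IsUnit Y)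
    (h : ∀ C ∈ 𝔠, ∀ i j : Fin d, (i : ℕ) < M → (j : ℕ) < N →
      (X * C * Y) i j = 0) :
    ∃ U V : Matrix (Fin d) (Fin d) ℂ,
      U ∈ Matrix.unitaryGroup (Fin d) ℂ ∧ V ∈ Matrix.unitaryGroup (Fin d) ℂ ∧
      ∀ C ∈ 𝔠, ∀ i j : Fin d, (i : ℕ) < M → (j : ℕ) < N →
        (U * C * V) i j = 0 :=
  decomposable_with_unitaries_general 𝔠 (s := {i : Fin d | i < M}) (t := {j : Fin d | j < N})
    ((linearIndependent_rows_iff_isUnit.2 hX).linearIndepOn _)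
    ((linearIndependent_cols_iff_isUnit.2 hY).linearIndepOn _) h
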